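/- Fix M > 0 and let f : [0,M] → ℝ be continuous. Then the map φ_f : D_M → D_M, x ↦ x + f, is continuous with respect to the Skorohod J1 distance; quantitatively, for all x, y ∈ D_M and δ > 0 with d_{J1}(x,y) < δ one has d_{J1}(x+f, y+f) ≤ 4δ + w_f(2δ), where w_f(δ) = sup{ |f(s) − f(t)| : s,t ∈ [0,M], |s−t| ≤ δ } is the modulus of continuity of f. -/

import Mathlib

open MeasureTheory Filter Set

noncomputable section

/-- Time changes on `[0,M]`: strictly increasing continuous bijections fixing the
endpoints. -/
def TimeChange (M : ℝ) : Set (ℝ → ℝ) :=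
  {l | ContinuousOn l (Icc 0 M) ∧ StrictMonoOn l (Icc 0 M) ∧
       l 0 = 0 ∧ l M = M ∧ Set.BijOn l (Icc 0 M) (Icc 0 M)}

/-- The Skorohod J1 distance on `[0,M]`. -/
def dJ1 (M : ℝ) (f g : ℝ → ℝ) : ℝ :=
  sInf ((fun l => max (⨆ t : Icc (0:ℝ) M, |f t - g (l t)|)
                      (⨆ t : Icc (0:ℝ) M, |l t - (t : ℝ)|)) '' TimeChange M)

/-- càdlàg on `[0,M]`. -/
def Cadlag (M : ℝ) (x : ℝ → ℝ) : Prop :=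
  (∀ t ∈ Ico (0:ℝ) M, Tendsto x (nhdsWithin t (Ioi t)) (nhds (x t))) ∧
  (∀ t ∈ Ioc (0:ℝ) M, ∃ L : ℝ, Tendsto x (nhdsWithin t (Iio t)) (nhds L))

/-- The modulus of continuity of `f` on `[0,M]` at scale `δ`. -/
def modCont (M : ℝ) (f : ℝ → ℝ) (δ : ℝ) : ℝ :=
  sSup {r : ℝ | ∃ s ∈ Icc (0:ℝ) M, ∃ t ∈ Icc (0:ℝ) M, |s - t| ≤ δ ∧ r = |f s - f t|}

theorem cadlag_bdd (M : ℝ) (x : ℝ → ℝ) (hx : Cadlag M x) :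
    ∃ C : ℝ, ∀ t ∈ Icc (0:ℝ) M, |x t| ≤ C := by
  have key : ∃ C : ℝ, ∀ t ∈ Icc (0:ℝ) M, |x t| ≤ C := by
    refine IsCompact.induction_on (p := fun s => ∃ C : ℝ, ∀ t ∈ s, |x t| ≤ C)
      (isCompact_Icc (a := (0:ℝ)) (b := M)) ⟨0, by simp⟩ ?_ ?_ ?_
    · rintro s t hst ⟨C, hC⟩
      exact ⟨C, fun u hu => hC u (hst hu)⟩
    · rintro s t ⟨C, hC⟩ ⟨D, hD⟩
      refine ⟨max C D, fun u hu => ?_⟩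
      rcases hu with hu | hu
      · exact (hC u hu).trans (le_max_left _ _)
      · exact (hD u hu).trans (le_max_right _ _)
    · intro t ht
      have hR : ∃ C : ℝ, ∀ᶠ u in nhds t, u ∈ Ioi t → u ≤ M → |x u| ≤ C := by
        rcases lt_or_ge t M with h | h
        · have h1 := (hx.1 t ⟨ht.1, h⟩).abs
          refine ⟨|x t| + 1, ?_⟩
          have h2 := h1.eventually (Iio_mem_nhds (lt_add_one |x t|))
          rw [eventually_nhdsWithin_iff] at h2
          filter_upwards [h2] with u hu h3 _
          exact le_of_lt (hu h3)
        · exact ⟨0, Eventually.of_forall fun u hu hu' => absurd (lt_of_lt_of_le hu hu') (not_lt.2 h)⟩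
      have hL : ∃ C : ℝ, ∀ᶠ u in nhds t, u ∈ Iio t → 0 ≤ u → |x u| ≤ C := by
        rcases lt_or_ge 0 t with h | h
        · obtain ⟨L, hL⟩ := hx.2 t ⟨h, ht.2⟩
          refine ⟨|L| + 1, ?_⟩
          have h2 := hL.abs.eventually (Iio_mem_nhds (lt_add_one |L|))
          rw [eventually_nhdsWithin_iff] at h2
          filter_upwards [h2] with u hu h3 _
          exact le_of_lt (hu h3)
        · exact ⟨0, Eventually.of_forall fun u hu hu' => absurd (lt_of_le_of_lt hu' hu) (not_lt.2 h)⟩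
      obtain ⟨C, hC⟩ := hR
      obtain ⟨D, hD⟩ := hL
      refine ⟨{u | |x u| ≤ max |x t| (max C D)}, ?_, max |x t| (max C D), fun u hu => hu⟩
      refine eventually_nhdsWithin_iff.2 ?_
      filter_upwards [hC, hD] with u h1 h2 hu
      rcases lt_trichotomy u t with h | h | h
      · exact (h2 h hu.1).trans ((le_max_right _ _).trans (le_max_right _ _))
      · rw [h]; exact le_max_left _ _
      · exact (h1 h hu.2).trans ((le_max_left _ _).trans (le_max_right _ _))
  exact key

theorem modCont_bdd (M : ℝ) (f : ℝ → ℝ) (hf : ContinuousOn f (Icc 0 M)) (δ : ℝ) :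
    BddAbove {r : ℝ | ∃ s ∈ Icc (0:ℝ) M, ∃ t ∈ Icc (0:ℝ) M, |s - t| ≤ δ ∧ r = |f s - f t|} := by
  obtain ⟨C, hC⟩ := (isCompact_Icc (a := (0:ℝ)) (b := M)).exists_bound_of_continuousOn hf
  refine ⟨C + C, ?_⟩
  rintro r ⟨s, hs, t, ht, -, rfl⟩
  exact (abs_sub _ _).trans (add_le_add (hC s hs) (hC t ht))

theorem dJ1_quant (M : ℝ) (hM : 0 < M) (f : ℝ → ℝ) (hf : ContinuousOn f (Icc 0 M))
    (x y : ℝ → ℝ) (hx : Cadlag M x) (hy : Cadlag M y) (δ : ℝ) (hδ : 0 < δ)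
    (h : dJ1 M x y < δ) :
    dJ1 M (x + f) (y + f) ≤ 4 * δ + modCont M f (2 * δ) := by
  have hne : (TimeChange M).Nonempty :=
    ⟨id, continuousOn_id, strictMonoOn_id, rfl, rfl, Set.bijOn_id _⟩
  obtain ⟨_, ⟨l, hl, rfl⟩, hlt⟩ := exists_lt_of_csInf_lt (hne.image _) h
  obtain ⟨hlt1, hlt2⟩ := max_lt_iff.1 hlt
  have hmap : ∀ t ∈ Icc (0:ℝ) M, l t ∈ Icc (0:ℝ) M := fun t ht => hl.2.2.2.2.mapsTo ht
  obtain ⟨C, hC⟩ := cadlag_bdd M x hx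
  obtain ⟨D, hD⟩ := cadlag_bdd M y hy
  have b1 : ∀ t ∈ Icc (0:ℝ) M, |x t - y (l t)| ≤ δ := fun t ht => by
    refine (le_ciSup (f := fun t : Icc (0:ℝ) M => |x t - y (l t)|) ?_ ⟨t, ht⟩).trans hlt1.le
    refine ⟨C + D, ?_⟩
    rintro _ ⟨u, rfl⟩
    exact (abs_sub _ _).trans (add_le_add (hC u u.2) (hD _ (hmap u u.2)))
  have b2 : ∀ t ∈ Icc (0:ℝ) M, |l t - t| ≤ δ := fun t ht => by
    refine (le_ciSup (f := fun t : Icc (0:ℝ) M => |l t - (t:ℝ)|) ?_ ⟨t, ht⟩).trans hlt2.le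
    refine ⟨M, ?_⟩
    rintro _ ⟨u, rfl⟩
    have h1 := hmap u u.2
    have h2 := u.2
    exact abs_le.2 ⟨by linarith [h1.1, h2.2], by linarith [h1.2, h2.1]⟩
  have b3 : ∀ t ∈ Icc (0:ℝ) M, |f t - f (l t)| ≤ modCont M f (2 * δ) := fun t ht =>
    le_csSup (modCont_bdd M f hf _)
      ⟨t, ht, l t, hmap t ht, by rw [abs_sub_comm]; linarith [b2 t ht], rfl⟩
  have h0 : (0:ℝ) ∈ Icc (0:ℝ) M := ⟨le_rfl, hM.le⟩
  have hw : 0 ≤ modCont M f (2 * δ) := (abs_nonneg _).trans (b3 0 h0)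
  haveI : Nonempty (Icc (0:ℝ) M) := ⟨⟨0, h0⟩⟩
  refine (csInf_le ⟨0, ?_⟩ (mem_image_of_mem _ hl)).trans ?_
  · rintro _ ⟨m, -, rfl⟩
    exact (Real.iSup_nonneg fun t => abs_nonneg _).trans (le_max_left _ _)
  · refine max_le (ciSup_le fun t => ?_) (ciSup_le fun t => ?_)
    · have e : (x + f) t - (y + f) (l t) = (x t - y (l t)) + (f t - f (l t)) := by
        simp only [Pi.add_apply]; ring
      rw [e]
      refine (abs_add_le _ _).trans ?_
      linarith [b1 t t.2, b3 t t.2]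
    · linarith [b2 t t.2]

/-- **Adding a continuous function is J1-continuous.** The map `x ↦ x + f` on `D_M` is
continuous for the Skorohod J1 distance, and quantitatively
`d_{J1}(x+f, y+f) ≤ 4δ + w_f(2δ)` whenever `d_{J1}(x,y) < δ`. -/
theorem add_continuous_function_J1_continuous (M : ℝ) (hM : 0 < M)
    (f : ℝ → ℝ) (hf : ContinuousOn f (Icc 0 M)) :
    (∀ x : ℝ → ℝ, Cadlag M x → ∀ ε > 0, ∃ δ > 0, ∀ y : ℝ → ℝ, Cadlag M y →
      dJ1 M x y < δ → dJ1 M (x + f) (y + f) < ε) ∧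
    (∀ x y : ℝ → ℝ, Cadlag M x → Cadlag M y → ∀ δ > 0, dJ1 M x y < δ →
      dJ1 M (x + f) (y + f) ≤ 4 * δ + modCont M f (2 * δ)) := by
  refine ⟨fun x hx ε hε => ?_, fun x y hx hy δ hδ h => dJ1_quant M hM f hf x y hx hy δ hδ h⟩
  have hu := (isCompact_Icc (a := (0:ℝ)) (b := M)).uniformContinuousOn_of_continuous hf
  obtain ⟨η, hη, hu⟩ := Metric.uniformContinuousOn_iff.1 hu (ε / 4) (by linarith)
  refine ⟨min (η / 3) (ε / 16), lt_min (by linarith) (by linarith), fun y hy h => ?_⟩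
  have h1 := dJ1_quant M hM f hf x y hx hy _ (lt_min (by linarith) (by linarith)) h
  have h2 : modCont M f (2 * min (η / 3) (ε / 16)) ≤ ε / 4 := by
    refine Real.sSup_le ?_ (by linarith)
    rintro r ⟨s, hs, t, ht, hst, rfl⟩
    have h3 := hu s hs t ht (by
      rw [Real.dist_eq]; linarith [min_le_left (η / 3) (ε / 16)])
    rw [Real.dist_eq] at h3
    exact h3.le
  linarith [min_le_right (η / 3) (ε / 16)]

end
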